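/- Fix an integer r ≥ 2. For k sufficiently large in terms of r, for every real x ≥ 0 one has ( ∫_{t_1,...,t_r ≥ 0, t_1+⋯+t_r ≤ x} g(t_1) ⋯ g(t_r) dt_1 ⋯ dt_r )² ≤ (log k)^r · ∫_{t_1,...,t_r ≥ 0, t_1+⋯+t_r ≤ x} g(t_1)² ⋯ g(t_r)² dt_1 ⋯ dt_r. -/

import Mathlib

open MeasureTheory Filter

/-- `A = log k - 2 log log k`. -/
noncomputable def Aval (k : ℕ) : ℝ := Real.log k - 2 * Real.log (Real.log k)

/-- `T = (e^A - 1)/A`. -/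
noncomputable def Tval (k : ℕ) : ℝ := (Real.exp (Aval k) - 1) / Aval k

/-- `g(t) = 1/(1+At)` for `t ∈ [0,T]` and `0` otherwise. -/
noncomputable def gfun (k : ℕ) (t : ℝ) : ℝ :=
  if t ∈ Set.Icc (0 : ℝ) (Tval k) then 1 / (1 + Aval k * t) else 0

/-!
Put `L = log k`. For `x ≤ L` the domain lies in the cube `[0, L]^r`, whose volume is `L ^ r`, so the
inequality is Cauchy–Schwarz. For `x ≥ L ≥ r` the domain contains the unit cube. Then the left side
is at most `(∫ g) ^ (2 * r) = 1`, while the integral on the right is at least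
`(∫ t in [0, 1], g t ^ 2) ^ r = (1 + A) ^ (-r)`, and `1 + A ≤ L` because `2 * log L ≥ 1`.
-/

theorem sq_integral_le_measureReal_univ_mul_integral_sq {α : Type*} [MeasurableSpace α]
    {μ : Measure α} [IsFiniteMeasure μ] {f : α → ℝ} (hf : MemLp f 2 μ) :
    (∫ a, f a ∂μ) ^ 2 ≤ μ.real Set.univ * ∫ a, f a ^ 2 ∂μ := by
  have hf₁ : Integrable f μ := hf.integrable one_le_two
  have hf₂ : Integrable (fun a => f a ^ 2) μ := hf.integrable_sq
  have quadratic_nonneg (c : ℝ) :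
      0 ≤ μ.real Set.univ * (c * c) + (-2 * ∫ a, f a ∂μ) * c + ∫ a, f a ^ 2 ∂μ :=
    calc
      0 ≤ ∫ a, (c - f a) ^ 2 ∂μ := integral_nonneg fun a => sq_nonneg (c - f a)
      _ = ∫ a, (c ^ 2 - 2 * c * f a + f a ^ 2) ∂μ := by simp_rw [sub_sq]
      _ = _ := by
        rw [integral_add (by fun_prop) (by fun_prop),
          integral_sub (by fun_prop) (by fun_prop), integral_const_mul, integral_const, smul_eq_mul]
        ring
  have discrim_nonpos := discrim_le_zero quadratic_nonneg
  rw [discrim] at discrim_nonpos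
  linarith

section Product

variable {ι E : Type*} [Fintype ι] [MeasureSpace E] [SigmaFinite (volume : Measure E)]

theorem memLp_two_prod_comp_eval {g : E → ℝ} (hg : MemLp g 2) :
    MemLp (fun t : ι → E => ∏ i, g (t i)) 2 := by
  have measurable_prod : AEStronglyMeasurable (fun t : ι → E => ∏ i, g (t i)) volume :=
    Finset.aestronglyMeasurable_fun_prod _ fun i _ =>
      hg.aestronglyMeasurable.comp_quasiMeasurePreserving (Measure.quasiMeasurePreserving_eval _ i)
  rw [memLp_two_iff_integrable_sq measurable_prod]
  simp_rw [← Finset.prod_pow]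
  exact Integrable.fintype_prod (f := fun _ s => g s ^ 2) fun _ => hg.integrable_sq

theorem setIntegral_prod_comp_eval_le {g : E → ℝ} (hg₀ : 0 ≤ g) (hg : Integrable g)
    (s : Set (ι → E)) :
    ∫ t in s, ∏ i, g (t i) ≤ (∫ u, g u) ^ Fintype.card ι := by
  rw [← integral_fintype_prod_volume_eq_pow]
  exact setIntegral_le_integral (Integrable.fintype_prod (f := fun _ => g) fun _ => hg)
    (Eventually.of_forall fun t => Finset.prod_nonneg fun i _ => hg₀ (t i))

end Product

section Simplex

variable {ι : Type*} [Fintype ι]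

variable (ι) in
/-- The solid simplex cut from the nonnegative orthant of `ι → ℝ` by the half-space `∑ i, t i ≤ x`:
the domain of integration. It is empty for `x < 0`. -/
def cornerSimplex (x : ℝ) : Set (ι → ℝ) := {t | (∀ i, 0 ≤ t i) ∧ ∑ i, t i ≤ x}

theorem cornerSimplex_subset_Icc {x y : ℝ} (hxy : x ≤ y) :
    cornerSimplex ι x ⊆ Set.Icc 0 fun _ => y := fun _ ⟨ht₀, ht⟩ =>
  ⟨ht₀, fun i =>
    (Finset.single_le_sum (fun j _ => ht₀ j) (Finset.mem_univ i)).trans (ht.trans hxy)⟩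

theorem pi_Icc_subset_cornerSimplex {x y : ℝ} (hxy : Fintype.card ι * y ≤ x) :
    (Set.univ.pi fun _ : ι => Set.Icc 0 y) ⊆ cornerSimplex ι x := by
  refine fun t ht => ⟨fun i => (ht i trivial).1, ?_⟩
  calc
    ∑ i, t i ≤ ∑ _i : ι, y := Finset.sum_le_sum fun i _ => (ht i trivial).2
    _ = Fintype.card ι * y := by simp
    _ ≤ x := hxy

theorem volume_cornerSimplex_lt_top (x : ℝ) : volume (cornerSimplex ι x) < ⊤ :=
  (measure_mono (cornerSimplex_subset_Icc le_rfl)).trans_lt isCompact_Icc.measure_lt_top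

theorem volume_real_cornerSimplex_le {x y : ℝ} (hy : 0 ≤ y) (hxy : x ≤ y) :
    volume.real (cornerSimplex ι x) ≤ y ^ Fintype.card ι :=
  calc
    volume.real (cornerSimplex ι x) ≤ volume.real (Set.Icc (0 : ι → ℝ) fun _ => y) :=
      measureReal_mono (cornerSimplex_subset_Icc hxy) isCompact_Icc.measure_lt_top.ne
    _ = y ^ Fintype.card ι := by
      rw [measureReal_def, Real.volume_Icc_pi_toReal (a := 0) fun _ => hy]
      simp

theorem sq_setIntegral_cornerSimplex_prod_le {g : ℝ → ℝ} (hg : MemLp g 2) {x y : ℝ}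
    (hy : 0 ≤ y) (hxy : x ≤ y) :
    (∫ t in cornerSimplex ι x, ∏ i, g (t i)) ^ 2 ≤
      y ^ Fintype.card ι * ∫ t in cornerSimplex ι x, ∏ i, g (t i) ^ 2 := by
  have : IsFiniteMeasure (volume.restrict (cornerSimplex ι x)) :=
    isFiniteMeasure_restrict.2 (volume_cornerSimplex_lt_top x).ne
  simp_rw [Finset.prod_pow]
  refine (sq_integral_le_measureReal_univ_mul_integral_sq
    ((memLp_two_prod_comp_eval hg).restrict _)).trans ?_
  rw [measureReal_restrict_apply_univ]
  gcongr
  exact volume_real_cornerSimplex_le hy hxy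

theorem pow_setIntegral_Icc_le_setIntegral_cornerSimplex_prod {g : ℝ → ℝ} (hg₀ : 0 ≤ g)
    (hg : Integrable g) {x y : ℝ} (hxy : Fintype.card ι * y ≤ x) :
    (∫ u in Set.Icc 0 y, g u) ^ Fintype.card ι ≤ ∫ t in cornerSimplex ι x, ∏ i, g (t i) := by
  rw [← integral_fintype_prod_eq_pow, ← Measure.restrict_pi_pi, ← volume_pi]
  exact setIntegral_mono_set
    (Integrable.fintype_prod (f := fun _ => g) fun _ => hg).integrableOn
    (Eventually.of_forall fun t => Finset.prod_nonneg fun i _ => hg₀ (t i))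
    (pi_Icc_subset_cornerSimplex hxy).eventuallyLE

theorem sq_setIntegral_cornerSimplex_prod_le_of_one_le {g : ℝ → ℝ} (hg₀ : 0 ≤ g)
    (hg : Integrable g) (hg₂ : MemLp g 2) (hg₁ : ∫ u, g u ≤ 1) {y L : ℝ} (hL : 0 ≤ L)
    (hyL : Fintype.card ι * y ≤ L) (hgL : 1 ≤ L * ∫ u in Set.Icc 0 y, g u ^ 2) (x : ℝ) :
    (∫ t in cornerSimplex ι x, ∏ i, g (t i)) ^ 2 ≤
      L ^ Fintype.card ι * ∫ t in cornerSimplex ι x, ∏ i, g (t i) ^ 2 := by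
  rcases le_total x L with hxL | hLx
  · exact sq_setIntegral_cornerSimplex_prod_le hg₂ hL hxL
  have simplexIntegral_nonneg : 0 ≤ ∫ t in cornerSimplex ι x, ∏ i, g (t i) :=
    integral_nonneg fun t => Finset.prod_nonneg fun i _ => hg₀ (t i)
  have simplexIntegral_le_one : ∫ t in cornerSimplex ι x, ∏ i, g (t i) ≤ 1 :=
    (setIntegral_prod_comp_eval_le hg₀ hg _).trans (pow_le_one₀ (integral_nonneg hg₀) hg₁)
  calc
    (∫ t in cornerSimplex ι x, ∏ i, g (t i)) ^ 2 ≤ 1 :=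
      pow_le_one₀ simplexIntegral_nonneg simplexIntegral_le_one
    _ ≤ (L * ∫ u in Set.Icc 0 y, g u ^ 2) ^ Fintype.card ι := one_le_pow₀ hgL
    _ = L ^ Fintype.card ι * (∫ u in Set.Icc 0 y, g u ^ 2) ^ Fintype.card ι := mul_pow ..
    _ ≤ L ^ Fintype.card ι * ∫ t in cornerSimplex ι x, ∏ i, g (t i) ^ 2 := by
      gcongr
      exact pow_setIntegral_Icc_le_setIntegral_cornerSimplex_prod (fun u => sq_nonneg (g u))
        hg₂.integrable_sq (hyL.trans hLx)

end Simplex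

section OneAddMul

variable {a b : ℝ}

theorem integral_one_div_one_add_mul (ha : 0 < a) (hb : 0 ≤ b) :
    ∫ t in 0..b, 1 / (1 + a * t) = Real.log (1 + a * b) / a := by
  rw [intervalIntegral.integral_comp_add_mul (fun u => 1 / u) ha.ne',
    integral_one_div_of_pos (by simp) (by positivity)]
  simp [div_eq_inv_mul]

theorem integral_one_div_one_add_mul_sq (ha : 0 ≤ a) (hb : 0 ≤ b) :
    ∫ t in 0..b, (1 / (1 + a * t)) ^ 2 = b / (1 + a * b) := by
  have denom_ne_zero : ∀ t ∈ Set.uIcc 0 b, 1 + a * t ≠ 0 := fun t ht => by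
    rw [Set.uIcc_of_le hb] at ht
    have := mul_nonneg ha ht.1
    positivity
  have hasDerivAt_primitive : ∀ t ∈ Set.uIcc 0 b,
      HasDerivAt (fun t => t / (1 + a * t)) ((1 / (1 + a * t)) ^ 2) t := fun t ht => by
    have hasDerivAt_denom : HasDerivAt (fun t => 1 + a * t) a t := by
      simpa using ((hasDerivAt_id t).const_mul a).const_add 1
    refine ((hasDerivAt_id' t).fun_div hasDerivAt_denom (denom_ne_zero t ht)).congr_deriv ?_
    rw [div_pow]
    ring
  rw [intervalIntegral.integral_eq_sub_of_hasDerivAt hasDerivAt_primitive]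
  · simp
  · exact ((continuousOn_const.div (by fun_prop) denom_ne_zero).pow 2).intervalIntegrable

end OneAddMul

section Profile

variable {k : ℕ}

theorem Aval_pos (hk : 0 < Real.log k) : 0 < Aval k := by
  have log_half_le := Real.log_le_sub_one_of_pos (half_pos hk)
  rw [Real.log_div hk.ne' two_ne_zero] at log_half_le
  rw [Aval]
  linarith [Real.log_two_lt_d9]

theorem one_add_Aval_le_log (hk : 2 ≤ Real.log k) : 1 + Aval k ≤ Real.log k := by
  have log_two_le := Real.log_le_log two_pos hk
  rw [Aval]
  linarith [Real.log_two_gt_d9]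

theorem one_le_Tval (hA : 0 < Aval k) : 1 ≤ Tval k := by
  rw [Tval, one_le_div hA]
  linarith [Real.add_one_le_exp (Aval k)]

theorem one_add_Aval_mul_Tval (hA : Aval k ≠ 0) : 1 + Aval k * Tval k = Real.exp (Aval k) := by
  rw [Tval, mul_div_cancel₀ _ hA]
  ring

theorem gfun_eq_indicator (k : ℕ) :
    gfun k = (Set.Icc 0 (Tval k)).indicator fun t => 1 / (1 + Aval k * t) := by
  ext t
  simp only [gfun, Set.indicator_apply]

theorem gfun_nonneg (hA : 0 ≤ Aval k) : 0 ≤ gfun k := by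
  rw [gfun_eq_indicator]
  refine Set.indicator_nonneg fun t ht => ?_
  have := mul_nonneg hA ht.1
  positivity

theorem gfun_le_one (hA : 0 ≤ Aval k) (t : ℝ) : gfun k t ≤ 1 := by
  rw [gfun_eq_indicator]
  refine Set.indicator_apply_le' (fun ht => ?_) fun _ => zero_le_one
  have := mul_nonneg hA ht.1
  exact div_le_one_of_le₀ (by linarith) (by positivity)

theorem memLp_gfun (hA : 0 ≤ Aval k) (p : ENNReal) : MemLp (gfun k) p := by
  have measurable_gfun : Measurable (gfun k) :=
    Measurable.ite measurableSet_Icc (by fun_prop) measurable_const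
  have memLp_Icc : MemLp (gfun k) p (volume.restrict (Set.Icc 0 (Tval k))) := by
    refine MemLp.of_bound measurable_gfun.aestronglyMeasurable 1 (Eventually.of_forall fun t => ?_)
    rw [Real.norm_of_nonneg (gfun_nonneg hA t)]
    exact gfun_le_one hA t
  rwa [← memLp_indicator_iff_restrict measurableSet_Icc, gfun_eq_indicator,
    Set.indicator_indicator, Set.inter_self, ← gfun_eq_indicator] at memLp_Icc

theorem integral_gfun (hA : 0 < Aval k) : ∫ t, gfun k t = 1 := by
  have hT : 0 ≤ Tval k := zero_le_one.trans (one_le_Tval hA)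
  rw [gfun_eq_indicator, integral_indicator measurableSet_Icc, integral_Icc_eq_integral_Ioc,
    ← intervalIntegral.integral_of_le hT, integral_one_div_one_add_mul hA hT,
    one_add_Aval_mul_Tval hA.ne', Real.log_exp, div_self hA.ne']

theorem setIntegral_Icc_gfun_sq (hA : 0 ≤ Aval k) {y : ℝ} (hy : 0 ≤ y) (hyT : y ≤ Tval k) :
    ∫ t in Set.Icc 0 y, gfun k t ^ 2 = y / (1 + Aval k * y) := by
  have gfun_sq_eqOn : Set.EqOn (fun t => gfun k t ^ 2) (fun t => (1 / (1 + Aval k * t)) ^ 2)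
      (Set.Icc 0 y) := fun t ht => by
    simp only [gfun, if_pos (Set.Icc_subset_Icc_right hyT ht)]
  rw [setIntegral_congr_fun measurableSet_Icc gfun_sq_eqOn, integral_Icc_eq_integral_Ioc,
    ← intervalIntegral.integral_of_le hy, integral_one_div_one_add_mul_sq hA hy]

theorem one_le_log_mul_setIntegral_Icc_gfun_sq (hk : 2 ≤ Real.log k) :
    1 ≤ Real.log k * ∫ t in Set.Icc 0 1, gfun k t ^ 2 := by
  have hA : 0 < Aval k := Aval_pos (two_pos.trans_le hk)
  rw [setIntegral_Icc_gfun_sq hA.le zero_le_one (one_le_Tval hA), mul_one, mul_one_div,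
    one_le_div (by positivity)]
  exact one_add_Aval_le_log hk

end Profile

theorem stmt10_general {ι : Type*} [Fintype ι] {k : ℕ} (hk : 2 ≤ Real.log k)
    (hι : Fintype.card ι ≤ Real.log k) (x : ℝ) :
    (∫ t in {t : ι → ℝ | (∀ i, 0 ≤ t i) ∧ ∑ i, t i ≤ x}, ∏ i, gfun k (t i)) ^ 2 ≤
      Real.log k ^ Fintype.card ι *
        ∫ t in {t : ι → ℝ | (∀ i, 0 ≤ t i) ∧ ∑ i, t i ≤ x}, ∏ i, gfun k (t i) ^ 2 := by
  have hL : 0 < Real.log k := two_pos.trans_le hk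
  have hA : 0 < Aval k := Aval_pos hL
  exact sq_setIntegral_cornerSimplex_prod_le_of_one_le (gfun_nonneg hA.le)
    (memLp_one_iff_integrable.1 (memLp_gfun hA.le 1)) (memLp_gfun hA.le 2) (integral_gfun hA).le
    hL.le (by rwa [mul_one]) (one_le_log_mul_setIntegral_Icc_gfun_sq hk) x

theorem stmt10 (r : ℕ) (hr : 2 ≤ r) :
    ∀ᶠ k : ℕ in atTop, ∀ x : ℝ, 0 ≤ x →
      (∫ t in {t : Fin r → ℝ | (∀ i, 0 ≤ t i) ∧ ∑ i, t i ≤ x}, ∏ i, gfun k (t i)) ^ 2 ≤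
        Real.log k ^ r *
          ∫ t in {t : Fin r → ℝ | (∀ i, 0 ≤ t i) ∧ ∑ i, t i ≤ x}, ∏ i, gfun k (t i) ^ 2 := by
  have log_atTop : Tendsto (fun k : ℕ => Real.log k) atTop atTop :=
    Real.tendsto_log_atTop.comp tendsto_natCast_atTop_atTop
  filter_upwards [log_atTop.eventually_ge_atTop (r : ℝ)] with k hk x _
  simpa using stmt10_general (ι := Fin r) ((Nat.ofNat_le_cast.2 hr).trans hk) (by simpa) x
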